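/- For every constant C > 0 there exist Borel probability measures μ, ν on ℝ² (i.e., d = 1 and T = 2) with ∫ (|x_1| + |x_2|) dμ(x) ≤ 2 and ∫ (|x_1| + |x_2|) dν(x) ≤ 2, such that TV₁(μ, ν) > 0 and ATV₁(μ, ν) > C · TV₁(μ, ν). Consequently, there is no finite constant C such that ATV₁(μ, ν) ≤ C · TV₁(μ, ν) holds for all probability measures μ, ν on ℝ² with finite first moments. -/

import Mathlib

open MeasureTheory ProbabilityTheory
open scoped ENNReal

noncomputable section

/-- The path space `ℝ^{dT}`: `T` time steps with state space `ℝ^d`. -/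
abbrev Traj (d T : ℕ) : Type := Fin T → Fin d → ℝ

/-- Restriction of a path to its first `t` coordinates. -/
def restr (d : ℕ) {t T : ℕ} (h : t ≤ T) (x : Traj d T) : Traj d t :=
  fun i => x (Fin.castLE h i)

lemma measurable_restr (d : ℕ) {t T : ℕ} (h : t ≤ T) : Measurable (restr d h) :=
  measurable_pi_lambda _ (fun i => measurable_pi_apply _)

/-- σ-algebra generated by the first `t` coordinates of the first component. -/
def sigmaX (d T : ℕ) {t : ℕ} (h : t ≤ T) : MeasurableSpace (Traj d T × Traj d T) :=
  MeasurableSpace.comap (fun ω => restr d h ω.1) inferInstance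

/-- σ-algebra generated by the first `t` coordinates of the second component. -/
def sigmaY (d T : ℕ) {t : ℕ} (h : t ≤ T) : MeasurableSpace (Traj d T × Traj d T) :=
  MeasurableSpace.comap (fun ω => restr d h ω.2) inferInstance

lemma sigmaX_le (d T : ℕ) {t : ℕ} (h : t ≤ T) :
    sigmaX d T h ≤ (inferInstance : MeasurableSpace (Traj d T × Traj d T)) :=
  ((measurable_restr d h).comp measurable_fst).comap_le

lemma sigmaY_le (d T : ℕ) {t : ℕ} (h : t ≤ T) :
    sigmaY d T h ≤ (inferInstance : MeasurableSpace (Traj d T × Traj d T)) :=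
  ((measurable_restr d h).comp measurable_snd).comap_le

/-- A coupling `π` of two laws on the path space is *bicausal* if for each `t < T`,
`σ(Y_1,…,Y_t)` is conditionally independent of `σ(X_1,…,X_T)` given `σ(X_1,…,X_t)`, and
symmetrically. -/
def IsBicausal (d T : ℕ) (π : Measure (Traj d T × Traj d T)) [IsFiniteMeasure π] : Prop :=
  ∀ t, 1 ≤ t → ∀ h : t + 1 ≤ T,
    CondIndep (sigmaX d T (Nat.le_of_succ_le h)) (sigmaY d T (Nat.le_of_succ_le h))
      (sigmaX d T (le_refl T)) (sigmaX_le d T (Nat.le_of_succ_le h)) π ∧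
    CondIndep (sigmaY d T (Nat.le_of_succ_le h)) (sigmaX d T (Nat.le_of_succ_le h))
      (sigmaY d T (le_refl T)) (sigmaY_le d T (Nat.le_of_succ_le h)) π

/-- The set of couplings of `μ` and `ν`. -/
def Cpl {α : Type*} [MeasurableSpace α] (μ ν : Measure α) : Set (Measure (α × α)) :=
  {π | IsProbabilityMeasure π ∧ π.map Prod.fst = μ ∧ π.map Prod.snd = ν}

/-- The set of bicausal couplings of `μ` and `ν`. -/
def BCpl {d T : ℕ} (μ ν : Measure (Traj d T)) : Set (Measure (Traj d T × Traj d T)) :=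
  {π | π ∈ Cpl μ ν ∧ ∃ _ : IsFiniteMeasure π, IsBicausal d T π}

/-- Weighted total variation distance. -/
def TVw {d T : ℕ} (w : Traj d T → ℝ) (μ ν : Measure (Traj d T)) : ℝ≥0∞ :=
  ⨅ π ∈ Cpl μ ν, ∫⁻ q in {q : Traj d T × Traj d T | q.1 ≠ q.2},
    (ENNReal.ofReal (w q.1) + ENNReal.ofReal (w q.2)) ∂π

/-- Weighted adapted total variation distance. -/
def ATVw {d T : ℕ} (w : Traj d T → ℝ) (μ ν : Measure (Traj d T)) : ℝ≥0∞ :=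
  ⨅ π ∈ BCpl μ ν, ∫⁻ q in {q : Traj d T × Traj d T | q.1 ≠ q.2},
    (ENNReal.ofReal (w q.1) + ENNReal.ofReal (w q.2)) ∂π

/-- `p`-th power of the adapted Wasserstein distance (cost `|x-y|_p^p`). -/
def AWpow (p : ℝ) {d T : ℕ} (μ ν : Measure (Traj d T)) : ℝ≥0∞ :=
  ⨅ π ∈ BCpl μ ν, ∫⁻ q, ENNReal.ofReal (∑ i, ∑ j, |q.1 i j - q.2 i j| ^ p) ∂π

/-- The weight `w_p(x) = 1 + |x|_p^p`. -/
def wp (p : ℝ) {d T : ℕ} (x : Traj d T) : ℝ := 1 + ∑ i, ∑ j, |x i j| ^ p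

/-!
Under a bicausal coupling, `{Y_1 ≠ 1}` is independent of the whole of `X` given `X_1 = 1`. The mass
`μ(X_1 = 1) - ν(Y_1 = 1)` that any coupling must move out of `{X_1 = 1}` therefore cannot be chosen
among the cheap paths: it costs the conditional mean of the weight given `X_1 = 1`. In the example,
`μ` gives the paths `(1, 0)` and `(1, r + 2)` mass `1 / (r + 2)` each, and `ν` arises from `μ` by
moving the atom `(1, 0)` to `(0, 0)`. Plain total variation moves only this atom, at cost
`3 / (r + 2)`, whereas the conditional mean is of order `r`, so the adapted distance stays
at least `1 / 2`.
-/

open scoped NNReal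

section FibreConditioning

variable {Ω β : Type*} {mΩ : MeasurableSpace Ω} {mβ : MeasurableSpace β} {μ : Measure Ω}

lemma setLIntegral_eq_measure_mul_lintegral_cond [IsFiniteMeasure μ] (s : Set Ω) (g : Ω → ℝ≥0∞) :
    ∫⁻ ω in s, g ω ∂μ = μ s * ∫⁻ ω, g ω ∂μ[|s] := by
  rcases eq_or_ne (μ s) 0 with hs | hs
  · rw [setLIntegral_measure_zero s g hs, hs, zero_mul]
  · rw [ProbabilityTheory.cond, lintegral_smul_measure, smul_eq_mul,
      ENNReal.mul_inv_cancel_left hs (measure_ne_top μ s)]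

lemma map_cond_preimage {f : Ω → β} (hf : Measurable f) {s : Set β} (hs : MeasurableSet s) :
    (μ[|f ⁻¹' s]).map f = (μ.map f)[|s] := by
  rw [ProbabilityTheory.cond, ProbabilityTheory.cond, Measure.map_smul,
    Measure.restrict_map hf hs, Measure.map_apply hf hs]

variable [StandardBorelSpace Ω] [IsFiniteMeasure μ] [MeasurableSingletonClass β] {f : Ω → β}

lemma condExpKernel_comap_eq_cond (hf : Measurable f) {ω : Ω} (hω : μ (f ⁻¹' {f ω}) ≠ 0) :
    condExpKernel μ (mβ.comap f) ω = μ[|f ⁻¹' {f ω}] := by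
  ext u hu
  set κ := condExpKernel μ (mβ.comap f)
  set F := f ⁻¹' {f ω}
  have hF : MeasurableSet[mβ.comap f] F := ⟨_, measurableSet_singleton _, rfl⟩
  have hF' : MeasurableSet F := hf (measurableSet_singleton _)
  have hconst : ∀ ω' ∈ F, κ ω' u = κ ω u := fun ω' hω' =>
    (measurable_condExpKernel hu).factorsThrough hω'
  have hmass : κ ω u * μ F = μ (F ∩ u) := by
    calc κ ω u * μ F = ∫⁻ ω' in F, κ ω' u ∂(μ.trim hf.comap_le) := by
          rw [setLIntegral_congr_fun hF hconst, setLIntegral_const, trim_measurableSet_eq _ hF]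
      _ = ((μ.trim hf.comap_le) ⊗ₘ κ) (F ×ˢ u) := (Measure.compProd_apply_prod hF hu).symm
      _ = μ (F ∩ u) := by
          rw [compProd_trim_condExpKernel, Measure.map_apply _ (hF.prod hu)]
          · rfl
          · exact (measurable_id'' hf.comap_le).prodMk measurable_id
  rw [cond_apply hF', ← hmass, mul_comm,
    ENNReal.mul_inv_cancel_right hω (measure_ne_top μ F)]

lemma indep_cond_of_condIndep_comap (hf : Measurable f) {m₁ m₂ : MeasurableSpace Ω}
    (h : CondIndep (mβ.comap f) m₁ m₂ hf.comap_le μ) (y : β) :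
    Indep m₁ m₂ (μ[|f ⁻¹' {y}]) := by
  rcases eq_or_ne (μ (f ⁻¹' {y})) 0 with hy | hy
  · rw [cond_eq_zero_of_meas_eq_zero hy, Indep_iff]
    simp
  refine (Indep_iff m₁ m₂ _).2 fun s t hs ht => ?_
  have hfactor := ae_of_ae_trim hf.comap_le (h s t hs ht)
  obtain ⟨ω, rfl, hω⟩ := ((frequently_ae_mem_iff.2 hy).and_eventually hfactor).exists
  rwa [condExpKernel_comap_eq_cond hf hy] at hω

end FibreConditioning

section Couplings

variable {α : Type*} [MeasurableSpace α] {μ ν : Measure α} {π : Measure (α × α)}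

lemma tsub_le_measure_sdiff_of_mem_cpl (hπ : π ∈ Cpl μ ν) {A : Set α} (hA : MeasurableSet A) :
    μ A - ν A ≤ π (Prod.fst ⁻¹' A \ Prod.snd ⁻¹' A) := by
  obtain ⟨-, rfl, rfl⟩ := hπ
  rw [Measure.map_apply measurable_fst hA, Measure.map_apply measurable_snd hA]
  exact le_measure_sdiff

lemma map_diag_add_smul_dirac_mem_cpl {ρ : Measure α} {a : ℝ≥0∞} {x : α} (y : α)
    [IsProbabilityMeasure (ρ + a • Measure.dirac x)] :
    ρ.map Function.diag + a • Measure.dirac (x, y) ∈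
      Cpl (ρ + a • Measure.dirac x) (ρ + a • Measure.dirac y) := by
  have hfst : (ρ.map Function.diag + a • Measure.dirac (x, y)).map Prod.fst =
      ρ + a • Measure.dirac x := by
    rw [Measure.map_add _ _ measurable_fst, Measure.map_map measurable_fst measurable_diag,
      Measure.map_smul, Measure.map_dirac' measurable_fst]
    exact congrArg (· + _) Measure.map_id
  have hsnd : (ρ.map Function.diag + a • Measure.dirac (x, y)).map Prod.snd =
      ρ + a • Measure.dirac y := by
    rw [Measure.map_add _ _ measurable_snd, Measure.map_map measurable_snd measurable_diag,
      Measure.map_smul, Measure.map_dirac' measurable_snd]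
    exact congrArg (· + _) Measure.map_id
  have : IsProbabilityMeasure ((ρ.map Function.diag + a • Measure.dirac (x, y)).map Prod.fst) := by
    rwa [hfst]
  exact ⟨Measure.isProbabilityMeasure_of_map Prod.fst, hfst, hsnd⟩

end Couplings

section WeightedTotalVariation

variable {d t T : ℕ} {w : Traj d T → ℝ} {μ ν : Measure (Traj d T)}

lemma measurableSet_fst_ne_snd : MeasurableSet {q : Traj d T × Traj d T | q.1 ≠ q.2} :=
  (measurableSet_eq_fun measurable_fst measurable_snd).compl

lemma tvw_add_smul_dirac_le (w : Traj d T → ℝ) {ρ : Measure (Traj d T)} {a : ℝ≥0∞}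
    {x : Traj d T} (y : Traj d T) [IsProbabilityMeasure (ρ + a • Measure.dirac x)] :
    TVw w (ρ + a • Measure.dirac x) (ρ + a • Measure.dirac y) ≤
      a * (ENNReal.ofReal (w x) + ENNReal.ofReal (w y)) := by
  refine (iInf₂_le _ (map_diag_add_smul_dirac_mem_cpl y)).trans ?_
  have hdiag : (ρ.map Function.diag) {q : Traj d T × Traj d T | q.1 ≠ q.2} = 0 := by
    rw [Measure.map_apply measurable_diag measurableSet_fst_ne_snd]
    exact measure_mono_null (fun z hz => hz rfl) measure_empty
  rw [Measure.restrict_add, lintegral_add_measure, setLIntegral_measure_zero _ _ hdiag, zero_add,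
    Measure.restrict_smul, lintegral_smul_measure, smul_eq_mul]
  gcongr
  exact (setLIntegral_le_lintegral _ _).trans_eq (lintegral_dirac _ _)

lemma tsub_le_tvw (hw : ∀ x, 1 ≤ w x) {A : Set (Traj d T)} (hA : MeasurableSet A) :
    μ A - ν A ≤ TVw w μ ν := by
  refine le_iInf₂ fun π hπ => ?_
  calc μ A - ν A ≤ π (Prod.fst ⁻¹' A \ Prod.snd ⁻¹' A) := tsub_le_measure_sdiff_of_mem_cpl hπ hA
    _ ≤ π {q | q.1 ≠ q.2} := measure_mono fun q hq h => hq.2 (h ▸ hq.1 : q.2 ∈ A)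
    _ = ∫⁻ _ in {q | q.1 ≠ q.2}, 1 ∂π := (setLIntegral_one _).symm
    _ ≤ _ := lintegral_mono fun q => (ENNReal.one_le_ofReal.2 (hw q.1)).trans le_self_add

/-- The event that a path starts with the prefix `p`. -/
def prefixCylinder (hT : t ≤ T) (p : Traj d t) : Set (Traj d T) := restr d hT ⁻¹' {p}

lemma measurableSet_prefixCylinder (hT : t ≤ T) (p : Traj d t) :
    MeasurableSet (prefixCylinder hT p) :=
  measurable_restr d hT (measurableSet_singleton p)

lemma IsBicausal.indep_cond_prefixCylinder {π : Measure (Traj d T × Traj d T)} [IsFiniteMeasure π]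
    (h : IsBicausal d T π) (ht : 1 ≤ t) (hT : t + 1 ≤ T) (p : Traj d t) :
    Indep (sigmaY d T (Nat.le_of_succ_le hT)) (sigmaX d T le_rfl)
      (π[|Prod.fst ⁻¹' prefixCylinder (Nat.le_of_succ_le hT) p]) :=
  indep_cond_of_condIndep_comap ((measurable_restr d _).comp measurable_fst) (h t ht hT).1 p

lemma IsBicausal.setLIntegral_prefixCylinder_sdiff {π : Measure (Traj d T × Traj d T)}
    [IsFiniteMeasure π] (h : IsBicausal d T π) (ht : 1 ≤ t) (hT : t + 1 ≤ T) (p : Traj d t)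
    {g : Traj d T → ℝ≥0∞} (hg : Measurable g) :
    let A := prefixCylinder (Nat.le_of_succ_le hT) p
    ∫⁻ q in Prod.fst ⁻¹' A \ Prod.snd ⁻¹' A, g q.1 ∂π =
      π (Prod.fst ⁻¹' A \ Prod.snd ⁻¹' A) * ∫⁻ x, g x ∂(π.map Prod.fst)[|A] := by
  intro A
  have hA : MeasurableSet A := measurableSet_prefixCylinder _ p
  set F : Set (Traj d T × Traj d T) := Prod.fst ⁻¹' A
  set N : Set (Traj d T × Traj d T) := (Prod.snd ⁻¹' A)ᶜ
  have hF : MeasurableSet F := measurable_fst hA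
  have hN : MeasurableSet N := (measurable_snd hA).compl
  have hN_past : MeasurableSet[sigmaY d T (Nat.le_of_succ_le hT)] N :=
    ⟨{p}ᶜ, (measurableSet_singleton p).compl, rfl⟩
  have hg_fst : Measurable[sigmaX d T le_rfl] fun q : Traj d T × Traj d T => g q.1 :=
    hg.comp (comap_measurable _)
  calc ∫⁻ q in F ∩ N, g q.1 ∂π = ∫⁻ q in F, N.indicator (fun _ => 1) q * g q.1 ∂π := by
        rw [Set.inter_comm, ← Measure.restrict_restrict hN, ← lintegral_indicator hN]
        refine lintegral_congr fun q => ?_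
        by_cases hq : q ∈ N <;>
          simp only [hq, Set.indicator_of_mem, Set.indicator_of_notMem, not_false_eq_true,
            one_mul, zero_mul]
    _ = π F * (π[N|F] * ∫⁻ q, g q.1 ∂π[|F]) := by
        rw [setLIntegral_eq_measure_mul_lintegral_cond,
          lintegral_mul_eq_lintegral_mul_lintegral_of_independent_measurableSpace
            (sigmaY_le d T _) (sigmaX_le d T le_rfl) (h.indep_cond_prefixCylinder ht hT p)
            (measurable_const.indicator hN_past) hg_fst, lintegral_indicator_const hN, one_mul]
    _ = π (F ∩ N) * ∫⁻ q, g q.1 ∂π[|F] := by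
        rw [← mul_assoc, mul_comm (π F), cond_mul_eq_inter hF]
    _ = π (F ∩ N) * ∫⁻ x, g x ∂(π.map Prod.fst)[|A] := by
        rw [← map_cond_preimage measurable_fst hA, lintegral_map hg measurable_fst]

lemma tsub_mul_lintegral_cond_prefixCylinder_le_atvw (hw : Measurable w) (ht : 1 ≤ t)
    (hT : t + 1 ≤ T) (p : Traj d t) :
    let A := prefixCylinder (Nat.le_of_succ_le hT) p
    (μ A - ν A) * ∫⁻ x, ENNReal.ofReal (w x) ∂μ[|A] ≤ ATVw w μ ν := by
  intro A
  refine le_iInf₂ fun π ⟨hπ, _, hbicausal⟩ => ?_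
  calc (μ A - ν A) * ∫⁻ x, ENNReal.ofReal (w x) ∂μ[|A]
      ≤ π (Prod.fst ⁻¹' A \ Prod.snd ⁻¹' A) * ∫⁻ x, ENNReal.ofReal (w x) ∂μ[|A] := by
        gcongr
        exact tsub_le_measure_sdiff_of_mem_cpl hπ (measurableSet_prefixCylinder _ p)
    _ = ∫⁻ q in Prod.fst ⁻¹' A \ Prod.snd ⁻¹' A, ENNReal.ofReal (w q.1) ∂π := by
        rw [hbicausal.setLIntegral_prefixCylinder_sdiff ht hT p hw.ennreal_ofReal, hπ.2.1]
    _ ≤ ∫⁻ q in {q | q.1 ≠ q.2}, ENNReal.ofReal (w q.1) ∂π :=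
        lintegral_mono_set fun q hq h => hq.2 (h ▸ hq.1 : q.2 ∈ A)
    _ ≤ _ := lintegral_mono fun q => le_self_add

end WeightedTotalVariation

section PowerWeight

variable {d T : ℕ}

lemma one_le_wp (p : ℝ) (x : Traj d T) : 1 ≤ wp p x :=
  le_add_of_nonneg_right (by positivity)

lemma measurable_wp (p : ℝ) : Measurable (wp p : Traj d T → ℝ) := by
  unfold wp
  fun_prop

end PowerWeight

/-- The two-step real path `(a, b)`. -/
def twoStep (a b : ℝ) : Traj 1 2 := ![fun _ => a, fun _ => b]

/-- The part shared by the two laws of the counterexample, of total mass `(r + 1) / (r + 2)`. The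
height `r + 2` makes the rare spike contribute exactly `1` to the first moment. -/
def spikeBase (r : ℝ≥0) : Measure (Traj 1 2) :=
  (r + 2 : ℝ≥0∞)⁻¹ • ((r : ℝ≥0∞) • Measure.dirac (twoStep 0 0) + Measure.dirac (twoStep 1 (r + 2)))

/-- The law under which a first step to `1` leads to `0` or to the spike with equal probability. -/
def spikeLaw (r : ℝ≥0) : Measure (Traj 1 2) :=
  spikeBase r + (r + 2 : ℝ≥0∞)⁻¹ • Measure.dirac (twoStep 1 0)

/-- The law under which a first step to `1` always leads to the spike. -/
def announcedSpikeLaw (r : ℝ≥0) : Measure (Traj 1 2) :=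
  spikeBase r + (r + 2 : ℝ≥0∞)⁻¹ • Measure.dirac (twoStep 0 0)

/-- The event `x_1 = 1`. -/
def stepToOne : Set (Traj 1 2) :=
  prefixCylinder (T := 2) (Nat.le_of_succ_le le_rfl) (fun (_ : Fin 1) (_ : Fin 1) => (1 : ℝ))

section SpikeLaws

lemma twoStep_mem_stepToOne_iff {a b : ℝ} : twoStep a b ∈ stepToOne ↔ a = 1 := by
  refine ⟨fun h => congrFun (congrFun h 0) 0, ?_⟩
  rintro rfl
  refine funext fun i => ?_
  rw [Subsingleton.elim i 0]
  rfl

lemma wp_one_twoStep (a b : ℝ) : wp 1 (twoStep a b) = 1 + (|a| + |b|) := by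
  simp [wp, twoStep]

lemma sum_abs_twoStep (a b : ℝ) : ∑ i, ∑ j, |twoStep a b i j| = |a| + |b| := by
  simp [twoStep]

lemma measurableSet_stepToOne : MeasurableSet stepToOne :=
  measurableSet_prefixCylinder _ _

variable (r : ℝ≥0)

lemma lintegral_spikeLaw (f : Traj 1 2 → ℝ≥0∞) :
    ∫⁻ x, f x ∂(spikeLaw r) =
      (r * f (twoStep 0 0) + f (twoStep 1 (r + 2)) + f (twoStep 1 0)) / (r + 2) := by
  simp only [spikeLaw, spikeBase, lintegral_add_measure, lintegral_smul_measure, lintegral_dirac,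
    smul_eq_mul, ← mul_add, ENNReal.div_eq_inv_mul]

lemma lintegral_announcedSpikeLaw (f : Traj 1 2 → ℝ≥0∞) :
    ∫⁻ x, f x ∂(announcedSpikeLaw r) =
      (r * f (twoStep 0 0) + f (twoStep 1 (r + 2)) + f (twoStep 0 0)) / (r + 2) := by
  simp only [announcedSpikeLaw, spikeBase, lintegral_add_measure, lintegral_smul_measure,
    lintegral_dirac, smul_eq_mul, ← mul_add, ENNReal.div_eq_inv_mul]

lemma add_two_div_self : (r + 2 : ℝ≥0∞) / (r + 2) = 1 :=
  ENNReal.div_self (by simp) (by finiteness)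

instance : IsProbabilityMeasure (spikeLaw r) := ⟨by
  rw [← lintegral_one, lintegral_spikeLaw, mul_one, add_assoc, one_add_one_eq_two,
    add_two_div_self]⟩

instance : IsProbabilityMeasure (announcedSpikeLaw r) := ⟨by
  rw [← lintegral_one, lintegral_announcedSpikeLaw, mul_one, add_assoc, one_add_one_eq_two,
    add_two_div_self]⟩

lemma ofReal_one_add_abs_add_two : ENNReal.ofReal (1 + |(r : ℝ) + 2|) = r + 3 := by
  have : 1 + |(r : ℝ) + 2| = (r + 3 : ℝ≥0) := by
    rw [abs_of_nonneg (by positivity)]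
    push_cast
    ring
  rw [this, ENNReal.ofReal_coe_nnreal]
  rfl

lemma lintegral_abs_spikeLaw_le :
    ∫⁻ x, ENNReal.ofReal (∑ i, ∑ j, |x i j|) ∂(spikeLaw r) ≤ 2 := by
  simp only [lintegral_spikeLaw, sum_abs_twoStep, abs_zero, abs_one, add_zero,
    ENNReal.ofReal_zero, ENNReal.ofReal_one, mul_zero, zero_add, ofReal_one_add_abs_add_two]
  refine ENNReal.div_le_of_le_mul ?_
  calc (r : ℝ≥0∞) + 3 + 1 ≤ r + 3 + 1 + r := le_self_add
    _ = 2 * (r + 2) := by ring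

lemma lintegral_abs_announcedSpikeLaw_le :
    ∫⁻ x, ENNReal.ofReal (∑ i, ∑ j, |x i j|) ∂(announcedSpikeLaw r) ≤ 2 := by
  simp only [lintegral_announcedSpikeLaw, sum_abs_twoStep, abs_zero, abs_one, add_zero,
    ENNReal.ofReal_zero, mul_zero, zero_add, ofReal_one_add_abs_add_two]
  refine ENNReal.div_le_of_le_mul ?_
  calc (r : ℝ≥0∞) + 3 ≤ r + 3 + (r + 1) := le_self_add
    _ = 2 * (r + 2) := by ring

lemma spikeLaw_stepToOne : spikeLaw r stepToOne = 2 / (r + 2) := by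
  rw [← lintegral_indicator_one measurableSet_stepToOne, lintegral_spikeLaw]
  simp [Set.indicator, twoStep_mem_stepToOne_iff, one_add_one_eq_two]

lemma announcedSpikeLaw_stepToOne : announcedSpikeLaw r stepToOne = 1 / (r + 2) := by
  rw [← lintegral_indicator_one measurableSet_stepToOne, lintegral_announcedSpikeLaw]
  simp [Set.indicator, twoStep_mem_stepToOne_iff]

lemma spikeLaw_tsub_announcedSpikeLaw_stepToOne :
    spikeLaw r stepToOne - announcedSpikeLaw r stepToOne = 1 / (r + 2) := by
  rw [spikeLaw_stepToOne, announcedSpikeLaw_stepToOne, ← one_add_one_eq_two, ENNReal.add_div]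
  exact ENNReal.add_sub_cancel_right (by finiteness)

lemma tvw_spikeLaw_le :
    TVw (wp 1) (spikeLaw r) (announcedSpikeLaw r) ≤ 3 / (r + 2) := by
  have : IsProbabilityMeasure (spikeBase r + (r + 2 : ℝ≥0∞)⁻¹ • Measure.dirac (twoStep 1 0)) :=
    inferInstanceAs (IsProbabilityMeasure (spikeLaw r))
  refine (tvw_add_smul_dirac_le (wp 1) (twoStep 0 0)).trans_eq ?_
  simp only [wp_one_twoStep]
  rw [ENNReal.div_eq_inv_mul, ← ENNReal.ofReal_add (by positivity) (by positivity)]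
  norm_num

lemma tvw_spikeLaw_pos : 0 < TVw (wp 1) (spikeLaw r) (announcedSpikeLaw r) := by
  refine lt_of_lt_of_le ?_ (tsub_le_tvw (one_le_wp 1) measurableSet_stepToOne)
  rw [spikeLaw_tsub_announcedSpikeLaw_stepToOne]
  exact ENNReal.div_pos one_ne_zero (by finiteness)

lemma one_le_setLIntegral_wp_spikeLaw :
    1 ≤ ∫⁻ x in stepToOne, ENNReal.ofReal (wp 1 x) ∂(spikeLaw r) := by
  rw [← lintegral_indicator measurableSet_stepToOne, lintegral_spikeLaw,
    ENNReal.le_div_iff_mul_le (by simp) (by simp)]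
  simp only [Set.indicator, twoStep_mem_stepToOne_iff, wp_one_twoStep, zero_ne_one, if_true,
    if_false, mul_zero, zero_add, one_mul, abs_one]
  calc (r + 2 : ℝ≥0∞) ≤ r + 2 + 1 := le_self_add
    _ = ENNReal.ofReal (1 + |(r : ℝ) + 2|) := by rw [ofReal_one_add_abs_add_two]; ring
    _ ≤ ENNReal.ofReal (1 + (1 + |(r : ℝ) + 2|)) :=
        ENNReal.ofReal_le_ofReal (le_add_of_nonneg_left zero_le_one)
    _ ≤ _ := le_self_add

lemma half_le_atvw_spikeLaw : 1 / 2 ≤ ATVw (wp 1) (spikeLaw r) (announcedSpikeLaw r) := by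
  calc (1 : ℝ≥0∞) / 2 ≤ 1 / 2 * ∫⁻ x in stepToOne, ENNReal.ofReal (wp 1 x) ∂(spikeLaw r) :=
        le_mul_of_one_le_right' (one_le_setLIntegral_wp_spikeLaw r)
    _ = 1 / (r + 2) * ∫⁻ x, ENNReal.ofReal (wp 1 x) ∂(spikeLaw r)[|stepToOne] := by
        rw [setLIntegral_eq_measure_mul_lintegral_cond, spikeLaw_stepToOne, ← mul_assoc,
          ← mul_div_assoc, ENNReal.div_mul_cancel two_ne_zero ENNReal.ofNat_ne_top]
    _ = (spikeLaw r stepToOne - announcedSpikeLaw r stepToOne) *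
        ∫⁻ x, ENNReal.ofReal (wp 1 x) ∂(spikeLaw r)[|stepToOne] := by
        rw [spikeLaw_tsub_announcedSpikeLaw_stepToOne]
    _ ≤ _ := tsub_mul_lintegral_cond_prefixCylinder_le_atvw (measurable_wp 1) le_rfl le_rfl _

lemma mul_three_div_six_mul_add_two_lt_half (c : ℝ≥0) :
    (c : ℝ≥0∞) * (3 / ((6 * c : ℝ≥0) + 2)) < 1 / 2 := by
  rw [← mul_div_assoc]
  refine ENNReal.div_lt_of_lt_mul ?_
  calc (c : ℝ≥0∞) * 3 < c * 3 + 1 := ENNReal.lt_add_right (by finiteness) one_ne_zero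
    _ = 1 / 2 * (2 * (c * 3 + 1)) := by
        rw [← mul_assoc, ENNReal.div_mul_cancel two_ne_zero ENNReal.ofNat_ne_top, one_mul]
    _ = 1 / 2 * ((6 * c : ℝ≥0) + 2) := by
        push_cast
        ring

end SpikeLaws

/-- No constant `C` works in `ATV₁ ≤ C · TV₁` over measures on `ℝ²` with
first moments bounded by `2`. -/
theorem atv1_tv1_no_uniform_constant (C : ℝ) (hC : 0 < C) :
    ∃ μ ν : Measure (Traj 1 2),
      IsProbabilityMeasure μ ∧ IsProbabilityMeasure ν ∧
      (∫⁻ x, ENNReal.ofReal (∑ i, ∑ j, |x i j|) ∂μ) ≤ 2 ∧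
      (∫⁻ x, ENNReal.ofReal (∑ i, ∑ j, |x i j|) ∂ν) ≤ 2 ∧
      0 < TVw (wp 1) μ ν ∧
      ENNReal.ofReal C * TVw (wp 1) μ ν < ATVw (wp 1) μ ν := by
  let r : ℝ≥0 := 6 * C.toNNReal
  refine ⟨spikeLaw r, announcedSpikeLaw r, inferInstance, inferInstance,
    lintegral_abs_spikeLaw_le r, lintegral_abs_announcedSpikeLaw_le r, tvw_spikeLaw_pos r, ?_⟩
  calc ENNReal.ofReal C * TVw (wp 1) (spikeLaw r) (announcedSpikeLaw r)
      ≤ ENNReal.ofReal C * (3 / (r + 2)) := by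
        gcongr
        exact tvw_spikeLaw_le r
    _ < 1 / 2 := mul_three_div_six_mul_add_two_lt_half C.toNNReal
    _ ≤ _ := half_le_atvw_spikeLaw r

end
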